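/- Let I be a finite index set and {X_i : i ∈ I} nonnegative integer-valued random variables on a common probability space satisfying the local dependence condition (LD2): for each i ∈ I there are subsets A_i ⊆ B_i ⊆ I with i ∈ A_i such that X_i is independent of {X_j : j ∉ A_i} and {X_j : j ∈ A_i} is independent of {X_j : j ∉ B_i}. Set W = Σ_{i∈I} X_i, Z_i = Σ_{j∈A_i} X_j, Z_i' = Σ_{j∈B_i} X_j, μ_i = E[X_i], μ = E[W], σ² = Var(W). Suppose for each i there is a σ-algebra 𝓕_i such that every X_j with j ∈ B_i is 𝓕_i-measurable, and θ_i ∈ [0,1] is a constant with P(W = j | 𝓕_i) ≤ θ_i almost surely for every j ∈ ℤ≥0. Let a < μ be an integer, λ = μ − a, and let k be an integer with k > λ and k ≥ 2. Then |P(W − a ≥ k)/F̄_λ(k) − 1| ≤ C2(λ,k)·Σ_{i∈I} θ_i·{ |E[(X_i − μ_i)Z_i]|·E[Z_i'] + E[|X_i − μ_i|·Z_i·(Z_i' − Z_i/2 − 1/2)] } + C1(λ,k)·|λ − σ²| + P(W − a ≤ −2). -/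

import Mathlib

open MeasureTheory ProbabilityTheory Finset Real

/-- Poisson point probability `π_j(λ) = e^{-λ} λ^j / j!`. -/
noncomputable def poissonPMF (l : ℝ) (j : ℕ) : ℝ := Real.exp (-l) * l ^ j / (Nat.factorial j)

/-- Poisson CDF `F_λ(j) = Σ_{i=0}^{j} π_i(λ)`. -/
noncomputable def poissonCDF (l : ℝ) (j : ℕ) : ℝ := ∑ i ∈ Finset.range (j + 1), poissonPMF l i

/-- Poisson right tail `F̄_λ(j) = Σ_{i=j}^{∞} π_i(λ)`. -/
noncomputable def poissonTail (l : ℝ) (j : ℕ) : ℝ := ∑' i : ℕ, poissonPMF l (j + i)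

/-- `C0(λ,k) = F_λ(k-1)/(k·π_k(λ))`. -/
noncomputable def SteinC0 (l : ℝ) (k : ℕ) : ℝ := poissonCDF l (k - 1) / (k * poissonPMF l k)

/-- `C1(λ,k)`. -/
noncomputable def SteinC1 (l : ℝ) (k : ℕ) : ℝ :=
  SteinC0 l k * (1 - min (poissonCDF l (k - 2) * l / ((k - 1) * poissonCDF l (k - 1)))
    (poissonTail l (k + 1) * k / (poissonTail l k * l)))

/-- `C2(λ,k)`. -/
noncomputable def SteinC2 (l : ℝ) (k : ℕ) : ℝ :=
  SteinC0 l k * (2 - poissonCDF l (k - 2) * l / ((k - 1) * poissonCDF l (k - 1))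
    - poissonTail l (k + 1) * k / (poissonTail l k * l))

/-- `f` solves the Poisson–Stein equation for the indicator of `[k,∞)`, with `f 0 = f 1`. -/
def IsSteinSolution (l : ℝ) (k : ℕ) (f : ℕ → ℝ) : Prop :=
  f 0 = f 1 ∧ ∀ j : ℕ, l * f (j + 1) - (j : ℝ) * f j =
    (if k ≤ j then (1 : ℝ) else 0) - poissonTail l k

/-!
Stein's method. For the event `[k, ∞)` the Stein equation
`λ f (j + 1) - j f j = 1 - 1_{k ≤ j} / F̄_λ(k)` has a solution `f` on all of `ℤ`: to the left of `k`
`f j = ∫_1^∞ s^(j-1) e^(λ(1-s)) ds`, and to the right a multiple of the integral over `(0, 1]`; the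
former makes sense for all integers `j`, so `W - a` may be negative. This `f` increases up to `k`,
decreases afterwards, and is convex on both sides, hence `Δf` is a difference of two monotone
functions with total oscillation `C2` and is bounded by `C1`. For a monotone `h`, the increments
telescope to the oscillation of `h`, so a second difference of `f` averaged against masses at most
`θ` is at most `C2 θ`.

Expand `E[(X_i - μ_i) f(W)]` around `W` without the variables in `B i`. Conditionally on `F i` the
second-order terms are such averages, and by (LD2) the first-order coefficients
`E[(X_i - μ_i) Z_i]` add up to `Var W`. So `E[(W - μ) f(W)]` is `σ² E[Δf(W)]` up to the stated sum,
and the Stein equation leaves the term `(λ - σ²) E[Δf(W)]`.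
-/

open scoped fwdDiff

section Poisson

variable {l : ℝ}

lemma poissonPMF_pos (hl : 0 < l) (j : ℕ) : 0 < poissonPMF l j := by
  unfold _root_.poissonPMF
  positivity

lemma succ_mul_poissonPMF_succ (l : ℝ) (j : ℕ) :
    ((j : ℝ) + 1) * poissonPMF l (j + 1) = l * poissonPMF l j := by
  unfold _root_.poissonPMF
  rw [Nat.factorial_succ]
  push_cast
  field_simp
  ring

lemma hasSum_poissonPMF (hl : 0 ≤ l) : HasSum (poissonPMF l) 1 :=
  hasSum_one_poissonMeasure ⟨l, hl⟩

lemma poissonCDF_succ (l : ℝ) (j : ℕ) :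
    poissonCDF l (j + 1) = poissonCDF l j + poissonPMF l (j + 1) :=
  Finset.sum_range_succ _ _

lemma poissonTail_succ_eq_one_sub (hl : 0 ≤ l) (j : ℕ) :
    poissonTail l (j + 1) = 1 - poissonCDF l j := by
  have h := (hasSum_poissonPMF hl).summable.sum_add_tsum_nat_add (j + 1)
  rw [(hasSum_poissonPMF hl).tsum_eq] at h
  simp only [poissonTail, poissonCDF, add_comm (j + 1)]
  linarith

end Poisson

section SteinKernel

variable {l : ℝ} {j : ℤ}

/-- The integrand `s ^ (j - 1) * e ^ (l * (1 - s))` of the incomplete gamma integrals which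
represent the Poisson ratios `F_l(j - 1) / (j π_j(l))` and `F̄_l(j) / (j π_j(l))`. -/
noncomputable def steinKernel (l : ℝ) (j : ℤ) (s : ℝ) : ℝ := s ^ (j - 1) * exp (l * (1 - s))

/-- The ratio `F_l(j - 1) / (j π_j(l))`, extended from `j ≥ 1` to all integers `j` by an upper
incomplete gamma integral. -/
noncomputable def poissonCDFRatio (l : ℝ) (j : ℤ) : ℝ := ∫ s in Set.Ioi 1, steinKernel l j s

/-- The ratio `F̄_l(j) / (j π_j(l))` as a lower incomplete gamma integral, meaningful for `j ≥ 1`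
(the integral diverges, and so takes the junk value `0`, for `j ≤ 0`). -/
noncomputable def poissonTailRatio (l : ℝ) (j : ℤ) : ℝ := ∫ s in Set.Ioc 0 1, steinKernel l j s

lemma steinKernel_nonneg {s : ℝ} (hs : 0 ≤ s) : 0 ≤ steinKernel l j s := by
  unfold steinKernel
  positivity

lemma steinKernel_succ {s : ℝ} (hs : s ≠ 0) : steinKernel l (j + 1) s = s * steinKernel l j s := by
  simp only [steinKernel, add_sub_right_comm j 1 1, zpow_add_one₀ hs]
  ring

lemma hasDerivAt_zpow_mul_exp {s : ℝ} (h : s ≠ 0 ∨ 0 ≤ j) :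
    HasDerivAt (fun s => s ^ j * exp (l * (1 - s)))
      (j * steinKernel l j s - l * steinKernel l (j + 1) s) s := by
  have hexp : HasDerivAt (fun s : ℝ => exp (l * (1 - s))) (exp (l * (1 - s)) * (l * -1)) s :=
    (((hasDerivAt_id s).const_sub 1).const_mul l).exp
  convert! (hasDerivAt_zpow j s h).mul hexp using 1
  simp only [steinKernel, add_sub_cancel_right]
  ring

lemma zpow_mul_exp_isLittleO (l : ℝ) (j : ℤ) {b : ℝ} (hb : b < l) :
    (fun s => s ^ j * exp (l * (1 - s))) =o[Filter.atTop] fun s => exp (-b * s) := by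
  have h := (isLittleO_zpow_exp_pos_mul_atTop j (sub_pos.2 hb)).mul_isBigO
    (Asymptotics.isBigO_refl (fun s => exp (l * (1 - s))) Filter.atTop)
  refine h.trans_isBigO (Asymptotics.IsBigO.of_bound (exp l) (.of_forall fun s => ?_))
  rw [← exp_add, norm_of_nonneg (exp_pos _).le, norm_of_nonneg (exp_pos _).le, ← exp_add]
  exact (congrArg exp (by ring)).le

lemma integrableOn_steinKernel_Ioi (hl : 0 < l) (j : ℤ) :
    IntegrableOn (steinKernel l j) (Set.Ioi 1) := by
  refine integrable_of_isBigO_exp_neg (half_pos hl) ?_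
    (zpow_mul_exp_isLittleO l (j - 1) (half_lt_self hl)).isBigO
  refine ContinuousOn.mul (continuousOn_id.zpow₀ _ fun s hs => Or.inl ?_) (by fun_prop)
  exact (zero_lt_one.trans_le hs).ne'

lemma intervalIntegrable_steinKernel (l : ℝ) (hj : 1 ≤ j) :
    IntervalIntegrable (steinKernel l j) volume 0 1 := by
  refine ContinuousOn.intervalIntegrable (ContinuousOn.mul ?_ (by fun_prop))
  exact continuousOn_id.zpow₀ _ fun _ _ => Or.inr (by omega)

lemma integrableOn_steinKernel_Ioc (l : ℝ) (hj : 1 ≤ j) :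
    IntegrableOn (steinKernel l j) (Set.Ioc 0 1) :=
  (intervalIntegrable_iff_integrableOn_Ioc_of_le zero_le_one).1
    (intervalIntegrable_steinKernel l hj)

lemma poissonCDFRatio_nonneg (l : ℝ) (j : ℤ) : 0 ≤ poissonCDFRatio l j :=
  setIntegral_nonneg measurableSet_Ioi fun _ hs => steinKernel_nonneg (zero_lt_one.trans hs).le

lemma poissonTailRatio_pos (l : ℝ) (hj : 1 ≤ j) : 0 < poissonTailRatio l j := by
  rw [poissonTailRatio, ← intervalIntegral.integral_of_le zero_le_one]
  refine intervalIntegral.intervalIntegral_pos_of_pos_on (intervalIntegrable_steinKernel l hj)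
    (fun s hs => ?_) zero_lt_one
  have := hs.1
  unfold steinKernel
  positivity

lemma mul_poissonCDFRatio_succ (hl : 0 < l) (j : ℤ) :
    l * poissonCDFRatio l (j + 1) = j * poissonCDFRatio l j + 1 := by
  have hlim : Filter.Tendsto (fun s => s ^ j * exp (l * (1 - s))) Filter.atTop (nhds 0) :=
    (zpow_mul_exp_isLittleO l j (half_lt_self hl)).isBigO.trans_tendsto <| by
      simpa using (tendsto_exp_comp_nhds_zero.2 <|
        Filter.tendsto_id.const_mul_atTop_of_neg (neg_lt_zero.2 (half_pos hl)))
  have hderiv (s : ℝ) (hs : 1 ≤ s) := hasDerivAt_zpow_mul_exp (l := l) (j := j) (s := s)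
    (Or.inl (zero_lt_one.trans_le hs).ne')
  have hint (i : ℤ) (c : ℝ) := (integrableOn_steinKernel_Ioi hl i).const_mul c
  have h := integral_Ioi_of_hasDerivAt_of_tendsto (hderiv 1 le_rfl).continuousAt.continuousWithinAt
    (fun s hs => hderiv s (Set.mem_Ioi.1 hs).le) ((hint j j).sub (hint (j + 1) l)) hlim
  rw [integral_sub (hint j j) (hint (j + 1) l), integral_const_mul, integral_const_mul] at h
  simp only [one_zpow, sub_self, mul_zero, exp_zero, mul_one, zero_sub] at h
  unfold poissonCDFRatio
  linarith

lemma mul_poissonTailRatio_succ (l : ℝ) (hj : 1 ≤ j) :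
    l * poissonTailRatio l (j + 1) = j * poissonTailRatio l j - 1 := by
  have hint {i : ℤ} (hi : 1 ≤ i) (c : ℝ) := (intervalIntegrable_steinKernel l hi).const_mul c
  have hj' : 1 ≤ j + 1 := by omega
  have h := intervalIntegral.integral_eq_sub_of_hasDerivAt
    (fun s _ => hasDerivAt_zpow_mul_exp (l := l) (j := j) (Or.inr (by omega)))
    ((hint hj j).sub (hint hj' l))
  rw [intervalIntegral.integral_sub (hint hj j) (hint hj' l), intervalIntegral.integral_const_mul,
    intervalIntegral.integral_const_mul, zero_zpow j (by omega)] at h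
  simp only [one_zpow, sub_self, mul_zero, exp_zero, mul_one, zero_mul, sub_zero,
    intervalIntegral.integral_of_le zero_le_one] at h
  unfold poissonTailRatio
  linarith

lemma mul_poissonTailRatio_one (l : ℝ) : l * poissonTailRatio l 1 = exp l - 1 := by
  have hderiv (s : ℝ) := hasDerivAt_zpow_mul_exp (l := l) (j := 0) (s := s) (Or.inr le_rfl)
  simp only [zpow_zero, one_mul, Int.cast_zero, zero_mul, zero_sub, zero_add] at hderiv
  have h := intervalIntegral.integral_eq_sub_of_hasDerivAt (fun s _ => hderiv s)
    ((intervalIntegrable_steinKernel l le_rfl).const_mul l).neg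
  simp only [intervalIntegral.integral_of_le zero_le_one, integral_neg, integral_const_mul,
    sub_self, mul_zero, exp_zero, sub_zero, mul_one] at h
  unfold poissonTailRatio
  linarith

lemma poissonCDF_eq_mul_poissonCDFRatio (hl : 0 < l) (n : ℕ) :
    poissonCDF l n = (n + 1) * poissonPMF l (n + 1) * poissonCDFRatio l (n + 1) := by
  have hstep (n : ℕ) := mul_poissonCDFRatio_succ hl n
  simp only [succ_mul_poissonPMF_succ]
  induction n with
  | zero =>
    have := hstep 0
    simp only [poissonCDF, zero_add, sum_range_one, Nat.cast_zero] at *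
    norm_num at *
    linear_combination (-poissonPMF l 0) * this
  | succ n ih =>
    have h := hstep (n + 1)
    push_cast at h ⊢
    rw [poissonCDF_succ, ih]
    linear_combination (-poissonPMF l (n + 1)) * h -
      poissonCDFRatio l (n + 1) * succ_mul_poissonPMF_succ l n

lemma poissonTail_eq_mul_poissonTailRatio (hl : 0 < l) (n : ℕ) :
    poissonTail l (n + 1) = (n + 1) * poissonPMF l (n + 1) * poissonTailRatio l (n + 1) := by
  simp only [succ_mul_poissonPMF_succ, poissonTail_succ_eq_one_sub hl.le]
  induction n with
  | zero =>
    have h1 := mul_poissonTailRatio_one l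
    have h2 : exp (-l) * exp l = 1 := by rw [← exp_add]; simp
    simp only [poissonCDF, zero_add, sum_range_one, Nat.cast_zero, _root_.poissonPMF, pow_zero,
      Nat.factorial_zero, Nat.cast_one, div_one, mul_one]
    linear_combination (-exp (-l)) * h1 - h2
  | succ n ih =>
    have h := mul_poissonTailRatio_succ l (j := n + 1) (by omega)
    push_cast at h ⊢
    rw [poissonCDF_succ, ← sub_sub, ih]
    linear_combination (-poissonPMF l (n + 1)) * h -
      poissonTailRatio l (n + 1) * succ_mul_poissonPMF_succ l n

lemma setIntegral_steinKernel_succ_sub {S : Set ℝ} (hS : MeasurableSet S) (hS0 : S ⊆ Set.Ioi 0)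
    (h : IntegrableOn (steinKernel l j) S) (h' : IntegrableOn (steinKernel l (j + 1)) S) :
    (∫ s in S, steinKernel l (j + 1) s) - ∫ s in S, steinKernel l j s =
      ∫ s in S, (s - 1) * steinKernel l j s := by
  rw [← integral_sub h' h]
  refine setIntegral_congr_fun hS fun s hs => ?_
  simp only [steinKernel_succ (hS0 hs).ne']
  ring

lemma setIntegral_steinKernel_convex {S : Set ℝ} (hS : MeasurableSet S) (hS0 : S ⊆ Set.Ioi 0)
    (h : ∀ i, j ≤ i → IntegrableOn (steinKernel l i) S) :
    (∫ s in S, steinKernel l (j + 1) s) - ∫ s in S, steinKernel l j s ≤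
      (∫ s in S, steinKernel l (j + 1 + 1) s) - ∫ s in S, steinKernel l (j + 1) s := by
  have hj := h j le_rfl
  have hj1 := h (j + 1) (by omega)
  have hj2 := h (j + 1 + 1) (by omega)
  rw [← sub_nonneg, ← integral_sub' hj2 hj1, ← integral_sub' hj1 hj,
    ← integral_sub (hj2.sub hj1) (hj1.sub hj)]
  refine setIntegral_nonneg hS fun s hs => ?_
  have hs0 : 0 < s := hS0 hs
  calc 0 ≤ (s - 1) ^ 2 * steinKernel l j s := mul_nonneg (sq_nonneg _) (steinKernel_nonneg hs0.le)
    _ = _ := by simp only [Pi.sub_apply, steinKernel_succ hs0.ne']; ring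

lemma fwdDiff_poissonCDFRatio_nonneg (hl : 0 < l) (j : ℤ) : 0 ≤ Δ_[1] (poissonCDFRatio l) j := by
  have h := setIntegral_steinKernel_succ_sub measurableSet_Ioi (Set.Ioi_subset_Ioi zero_le_one)
    (integrableOn_steinKernel_Ioi hl j) (integrableOn_steinKernel_Ioi hl (j + 1))
  refine (setIntegral_nonneg measurableSet_Ioi fun s hs => ?_).trans_eq h.symm
  exact mul_nonneg (sub_nonneg.2 (Set.mem_Ioi.1 hs).le)
    (steinKernel_nonneg (zero_lt_one.trans hs).le)

lemma fwdDiff_poissonTailRatio_nonpos (l : ℝ) (hj : 1 ≤ j) : Δ_[1] (poissonTailRatio l) j ≤ 0 := by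
  have h := setIntegral_steinKernel_succ_sub measurableSet_Ioc Set.Ioc_subset_Ioi_self
    (integrableOn_steinKernel_Ioc l hj) (integrableOn_steinKernel_Ioc l (hj.trans (by omega)))
  refine h.trans_le (setIntegral_nonpos measurableSet_Ioc fun s hs => ?_)
  exact mul_nonpos_of_nonpos_of_nonneg (sub_nonpos.2 hs.2) (steinKernel_nonneg hs.1.le)

lemma fwdDiff_poissonCDFRatio_le_succ (hl : 0 < l) (j : ℤ) :
    Δ_[1] (poissonCDFRatio l) j ≤ Δ_[1] (poissonCDFRatio l) (j + 1) :=
  setIntegral_steinKernel_convex measurableSet_Ioi (Set.Ioi_subset_Ioi zero_le_one)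
    fun i _ => integrableOn_steinKernel_Ioi hl i

lemma fwdDiff_poissonTailRatio_le_succ (l : ℝ) (hj : 1 ≤ j) :
    Δ_[1] (poissonTailRatio l) j ≤ Δ_[1] (poissonTailRatio l) (j + 1) :=
  setIntegral_steinKernel_convex measurableSet_Ioc Set.Ioc_subset_Ioi_self
    fun _ hi => integrableOn_steinKernel_Ioc l (hj.trans hi)

end SteinKernel

section JordanBounded

variable {α β : Type*} [Preorder α] [Preorder β] {C : ℝ} {h : α → ℝ}

/-- `h` is a difference of two monotone functions with values in `[0, C]`. This bounds both `|h|`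
and the upward and the downward variation of `h` by `C`. -/
def IsJordanBounded (C : ℝ) (h : α → ℝ) : Prop :=
  ∃ ψ φ : α → ℝ, (Monotone ψ ∧ ∀ a, ψ a ∈ Set.Icc 0 C) ∧ (Monotone φ ∧ ∀ a, φ a ∈ Set.Icc 0 C) ∧
    h = ψ - φ

lemma IsJordanBounded.abs_le (hh : IsJordanBounded C h) (a : α) : |h a| ≤ C := by
  obtain ⟨ψ, φ, ⟨-, hψ⟩, ⟨-, hφ⟩, rfl⟩ := hh
  exact abs_sub_le_of_nonneg_of_le (hψ a).1 (hψ a).2 (hφ a).1 (hφ a).2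

lemma IsJordanBounded.abs_fwdDiff_le {h : ℕ → ℝ} (hh : IsJordanBounded C h) (n : ℕ) :
    |Δ_[1] h n| ≤ C := by
  obtain ⟨ψ, φ, ⟨hψ, hψC⟩, ⟨hφ, hφC⟩, rfl⟩ := hh
  have hΔ {χ : ℕ → ℝ} (hχ : Monotone χ) (hχC : ∀ n, χ n ∈ Set.Icc 0 C) :
      0 ≤ χ (n + 1) - χ n ∧ χ (n + 1) - χ n ≤ C :=
    ⟨sub_nonneg.2 (hχ n.le_succ), by linarith [(hχC (n + 1)).2, (hχC n).1]⟩
  have h1 := hΔ hψ hψC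
  have h2 := hΔ hφ hφC
  exact (congrArg _ (sub_sub_sub_comm _ _ _ _)).trans_le
    (abs_sub_le_of_nonneg_of_le h1.1 h1.2 h2.1 h2.2)

lemma IsJordanBounded.comp_monotone (hh : IsJordanBounded C h) {e : β → α} (he : Monotone e) :
    IsJordanBounded C (h ∘ e) := by
  obtain ⟨ψ, φ, ⟨hψ, hψC⟩, ⟨hφ, hφC⟩, rfl⟩ := hh
  exact ⟨ψ ∘ e, φ ∘ e, ⟨hψ.comp he, fun b => hψC (e b)⟩, ⟨hφ.comp he, fun b => hφC (e b)⟩, rfl⟩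

variable {Ω : Type*} [MeasurableSpace Ω] {ν : Measure Ω} [IsFiniteMeasure ν] {v : Ω → ℕ} {q : ℝ}

lemma integrable_comp_of_abs_le {f : ℕ → ℝ} (hf : ∀ n, |f n| ≤ C) (hv : Measurable v) :
    Integrable (fun ω => f (v ω)) ν :=
  .of_bound ((measurable_of_countable f).comp hv).aestronglyMeasurable C
    (.of_forall fun ω => hf (v ω))

/- Abel summation: the increments of `ψ` are nonnegative and sum to at most `C`. -/
lemma integral_fwdDiff_comp_mem_Icc {ψ : ℕ → ℝ} (hψ : Monotone ψ) (hψC : ∀ n, ψ n ∈ Set.Icc 0 C)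
    (hv : Measurable v) (hq : ∀ n, ν.real (v ⁻¹' {n}) ≤ q) :
    ∫ ω, Δ_[1] ψ (v ω) ∂ν ∈ Set.Icc 0 (C * q) := by
  have hΔ (n : ℕ) : 0 ≤ Δ_[1] ψ n := sub_nonneg.2 (hψ n.le_succ)
  have hΔC (n : ℕ) : |Δ_[1] ψ n| ≤ C :=
    abs_sub_le_of_nonneg_of_le (hψC _).1 (hψC _).2 (hψC n).1 (hψC n).2
  have hint : Integrable (Δ_[1] ψ) (ν.map v) := integrable_comp_of_abs_le hΔC measurable_id
  refine ⟨integral_nonneg fun ω => hΔ (v ω), ?_⟩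
  rw [← integral_map hv.aemeasurable hint.aestronglyMeasurable, integral_countable hint]
  refine Real.tsum_le_of_sum_range_le (fun n => mul_nonneg measureReal_nonneg (hΔ n)) fun N => ?_
  calc ∑ n ∈ range N, (ν.map v).real {n} * Δ_[1] ψ n
      ≤ ∑ n ∈ range N, q * Δ_[1] ψ n := by
        refine sum_le_sum fun n _ => mul_le_mul_of_nonneg_right ?_ (hΔ n)
        exact (map_measureReal_apply hv (measurableSet_singleton n)).trans_le (hq n)
    _ = (ψ N - ψ 0) * q := by rw [← mul_sum, mul_comm]; exact congrArg (· * q) (sum_range_sub ψ N)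
    _ ≤ C * q := mul_le_mul_of_nonneg_right (by linarith [(hψC N).2, (hψC 0).1])
        (measureReal_nonneg.trans (hq 0))

lemma IsJordanBounded.abs_integral_fwdDiff_comp_le {h : ℕ → ℝ} (hh : IsJordanBounded C h)
    (hv : Measurable v) (hq : ∀ n, ν.real (v ⁻¹' {n}) ≤ q) :
    |∫ ω, Δ_[1] h (v ω) ∂ν| ≤ C * q := by
  obtain ⟨ψ, φ, ⟨hψ, hψC⟩, ⟨hφ, hφC⟩, rfl⟩ := hh
  have hint {χ : ℕ → ℝ} (hχ : ∀ n, χ n ∈ Set.Icc 0 C) : Integrable (fun ω => Δ_[1] χ (v ω)) ν :=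
    integrable_comp_of_abs_le
      (fun n => abs_sub_le_of_nonneg_of_le (hχ (n + 1)).1 (hχ _).2 (hχ n).1 (hχ n).2) hv
  have hsub (n : ℕ) : Δ_[1] (ψ - φ) n = Δ_[1] ψ n - Δ_[1] φ n := sub_sub_sub_comm _ _ _ _
  simp only [hsub, integral_sub (hint hψC) (hint hφC)]
  have h1 := integral_fwdDiff_comp_mem_Icc hψ hψC hv hq
  have h2 := integral_fwdDiff_comp_mem_Icc hφ hφC hv hq
  exact abs_sub_le_of_nonneg_of_le h1.1 h1.2 h2.1 h2.2

end JordanBounded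

/-- `g` increases up to `k`, decreases from `k` on, and is convex on either side of `k`. -/
structure IsConvexCusp (g : ℤ → ℝ) (k : ℤ) : Prop where
  fwdDiff_nonneg : ∀ j < k, 0 ≤ Δ_[1] g j
  fwdDiff_nonpos : ∀ j, k ≤ j → Δ_[1] g j ≤ 0
  fwdDiff_le_succ : ∀ j, j + 1 ≠ k → Δ_[1] g j ≤ Δ_[1] g (j + 1)

namespace IsConvexCusp

variable {g : ℤ → ℝ} {k : ℤ}

lemma le_apex (hg : IsConvexCusp g k) (j : ℤ) : g j ≤ g k := by
  rcases le_total j k with h | h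
  · refine monotoneOn_of_le_succ Set.ordConnected_Iic (fun i _ _ hi => ?_) h Set.self_mem_Iic h
    exact sub_nonneg.1 (hg.fwdDiff_nonneg i (Int.add_one_le_iff.1 hi))
  · refine antitoneOn_of_succ_le Set.ordConnected_Ici (fun i _ hi _ => ?_) Set.self_mem_Ici h h
    exact sub_nonpos.1 (hg.fwdDiff_nonpos i hi)

/- The only downward step of `Δ g` is the one from `k - 1` to `k`; adding its size back from `k` on
makes `Δ g` monotone. -/
lemma monotone_fwdDiff_add (hg : IsConvexCusp g k) :
    Monotone fun j => Δ_[1] g j + if k ≤ j then Δ_[1] g (k - 1) - Δ_[1] g k else 0 := by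
  refine monotone_int_of_le_succ fun j => ?_
  rcases eq_or_ne (j + 1) k with rfl | hj
  · simp
  · have := hg.fwdDiff_le_succ j hj
    simp only [show k ≤ j + 1 ↔ k ≤ j by omega]
    linarith

lemma fwdDiff_mem_Icc (hg : IsConvexCusp g k) (j : ℤ) :
    Δ_[1] g j ∈ Set.Icc (Δ_[1] g k) (Δ_[1] g (k - 1)) := by
  have h0 := hg.fwdDiff_nonneg (k - 1) (by omega)
  have h1 := hg.fwdDiff_nonpos k le_rfl
  rcases lt_or_ge j k with hj | hj
  · have := hg.monotone_fwdDiff_add (Int.le_sub_one_of_lt hj)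
    simp only [hj.not_ge, (sub_one_lt k).not_ge, if_false, add_zero] at this
    exact ⟨h1.trans (hg.fwdDiff_nonneg j hj), this⟩
  · have := hg.monotone_fwdDiff_add hj
    simp only [hj, le_refl, if_true] at this
    exact ⟨le_of_add_le_add_right this, (hg.fwdDiff_nonpos j hj).trans h0⟩

lemma isJordanBounded_fwdDiff (hg : IsConvexCusp g k) :
    IsJordanBounded (Δ_[1] g (k - 1) - Δ_[1] g k) (Δ_[1] g) := by
  have h0 := hg.fwdDiff_nonneg (k - 1) (by omega)
  have h1 := hg.fwdDiff_nonpos k le_rfl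
  set C := Δ_[1] g (k - 1) - Δ_[1] g k
  refine ⟨fun j => Δ_[1] g j + if k ≤ j then C else 0, fun j => if k ≤ j then C else 0,
    ⟨hg.monotone_fwdDiff_add, fun j => ?_⟩, ⟨fun i j hij => ?_, fun j => ?_⟩, by ext; simp⟩
  · obtain ⟨hmin, hmax⟩ := hg.fwdDiff_mem_Icc j
    rcases lt_or_ge j k with hj | hj
    · have := hg.fwdDiff_nonneg j hj
      simp only [hj.not_ge, if_false, add_zero]
      constructor <;> linarith
    · have := hg.fwdDiff_nonpos j hj
      simp only [hj, if_true]
      constructor <;> linarith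
  · dsimp only
    split_ifs <;> first | omega | linarith
  · dsimp only
    split_ifs <;> constructor <;> linarith

end IsConvexCusp

section SteinSolution

variable {l : ℝ} {k : ℕ}

lemma poissonTail_pos (hl : 0 < l) (hk : 1 ≤ k) : 0 < poissonTail l k := by
  obtain ⟨n, rfl⟩ := Nat.exists_eq_add_of_le' hk
  rw [poissonTail_eq_mul_poissonTailRatio hl]
  have := poissonPMF_pos hl (n + 1)
  have := poissonTailRatio_pos l (j := n + 1) (by omega)
  positivity

lemma poissonCDFRatio_pos (hl : 0 < l) {j : ℤ} (hj : 1 ≤ j) : 0 < poissonCDFRatio l j := by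
  have h := mul_poissonCDFRatio_succ hl (j - 1)
  rw [sub_add_cancel] at h
  refine pos_of_mul_pos_right (h ▸ ?_) hl.le
  have := poissonCDFRatio_nonneg l (j - 1)
  have : (0 : ℝ) ≤ (j - 1 : ℤ) := by exact_mod_cast sub_nonneg.2 hj
  positivity

lemma poissonCDFRatio_div_poissonTailRatio (hl : 0 < l) (hk : 1 ≤ k) :
    poissonCDFRatio l k / poissonTailRatio l k = 1 / poissonTail l k - 1 := by
  have ht := poissonTail_pos hl hk
  obtain ⟨n, rfl⟩ := Nat.exists_eq_add_of_le' hk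
  have hc : poissonCDF l n = 1 - poissonTail l (n + 1) := by
    rw [poissonTail_succ_eq_one_sub hl.le, sub_sub_cancel]
  rw [div_sub_one ht.ne', ← hc, poissonTail_eq_mul_poissonTailRatio hl,
    poissonCDF_eq_mul_poissonCDFRatio hl]
  have := poissonPMF_pos hl (n + 1)
  push_cast
  rw [mul_div_mul_left _ _ (by positivity)]

/-- The solution `g` on all of `ℤ` of the Stein equation
`l * g (j + 1) - j * g j = 1 - 1_{j ≥ k} / F̄_l(k)`, glued at `j = k` from its homogeneous
pieces on either side. -/
noncomputable def steinSolution (l : ℝ) (k : ℕ) (j : ℤ) : ℝ :=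
  if j ≤ k then poissonCDFRatio l j
  else poissonCDFRatio l k / poissonTailRatio l k * poissonTailRatio l j

lemma steinSolution_of_le {j : ℤ} (hj : j ≤ k) : steinSolution l k j = poissonCDFRatio l j :=
  if_pos hj

lemma steinSolution_of_ge (hk : 1 ≤ k) {j : ℤ} (hj : k ≤ j) :
    steinSolution l k j = poissonCDFRatio l k / poissonTailRatio l k * poissonTailRatio l j := by
  rcases hj.eq_or_lt with rfl | hj
  · rw [steinSolution_of_le le_rfl,
      div_mul_cancel₀ _ (poissonTailRatio_pos l (by exact_mod_cast hk)).ne']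
  · exact if_neg hj.not_ge

lemma steinSolution_equation (hl : 0 < l) (hk : 1 ≤ k) (j : ℤ) :
    l * steinSolution l k (j + 1) - j * steinSolution l k j =
      1 - (if k ≤ j then 1 / poissonTail l k else 0) := by
  rcases lt_or_ge j k with hj | hj
  · rw [steinSolution_of_le hj, steinSolution_of_le hj.le, if_neg hj.not_ge]
    linear_combination mul_poissonCDFRatio_succ hl j
  · have hj1 : 1 ≤ j := hj.trans' (by exact_mod_cast hk)
    rw [steinSolution_of_ge hk (hj.trans (by omega)), steinSolution_of_ge hk hj, if_pos hj]
    linear_combination poissonCDFRatio l k / poissonTailRatio l k *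
      mul_poissonTailRatio_succ l hj1 - poissonCDFRatio_div_poissonTailRatio hl hk

lemma fwdDiff_steinSolution_of_lt {j : ℤ} (hj : j < k) :
    Δ_[1] (steinSolution l k) j = Δ_[1] (poissonCDFRatio l) j := by
  simp only [fwdDiff, steinSolution_of_le hj, steinSolution_of_le hj.le]

lemma fwdDiff_steinSolution_of_ge (hk : 1 ≤ k) {j : ℤ} (hj : k ≤ j) :
    Δ_[1] (steinSolution l k) j =
      poissonCDFRatio l k / poissonTailRatio l k * Δ_[1] (poissonTailRatio l) j := by
  have hj1 : (k : ℤ) ≤ j + 1 := hj.trans (by omega)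
  rw [fwdDiff, fwdDiff, steinSolution_of_ge hk hj, steinSolution_of_ge hk hj1, mul_sub]

lemma isConvexCusp_steinSolution (hl : 0 < l) (hk : 1 ≤ k) :
    IsConvexCusp (steinSolution l k) k := by
  have hk' : (1 : ℤ) ≤ k := by exact_mod_cast hk
  have hc : 0 ≤ poissonCDFRatio l k / poissonTailRatio l k :=
    div_nonneg (poissonCDFRatio_nonneg l k) (poissonTailRatio_pos l hk').le
  refine ⟨fun j hj => ?_, fun j hj => ?_, fun j hj => ?_⟩
  · exact (fwdDiff_poissonCDFRatio_nonneg hl j).trans_eq (fwdDiff_steinSolution_of_lt hj).symm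
  · rw [fwdDiff_steinSolution_of_ge hk hj]
    exact mul_nonpos_of_nonneg_of_nonpos hc (fwdDiff_poissonTailRatio_nonpos l (hk'.trans hj))
  · rcases lt_or_ge j k with h | h
    · rw [fwdDiff_steinSolution_of_lt h, fwdDiff_steinSolution_of_lt (by omega)]
      exact fwdDiff_poissonCDFRatio_le_succ hl j
    · rw [fwdDiff_steinSolution_of_ge hk h, fwdDiff_steinSolution_of_ge hk (by omega)]
      exact mul_le_mul_of_nonneg_left (fwdDiff_poissonTailRatio_le_succ l (hk'.trans h)) hc

lemma steinSolution_nonneg (l : ℝ) (k : ℕ) (j : ℤ) : 0 ≤ steinSolution l k j := by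
  unfold steinSolution
  split_ifs with hj
  · exact poissonCDFRatio_nonneg l j
  · have hV (i : ℤ) : 0 ≤ poissonTailRatio l i :=
      setIntegral_nonneg measurableSet_Ioc fun _ hs => steinKernel_nonneg hs.1.le
    exact mul_nonneg (div_nonneg (poissonCDFRatio_nonneg l k) (hV k)) (hV j)

lemma steinC0_eq_poissonCDFRatio (hl : 0 < l) (hk : 1 ≤ k) : SteinC0 l k = poissonCDFRatio l k := by
  obtain ⟨n, rfl⟩ := Nat.exists_eq_add_of_le' hk
  have := poissonPMF_pos hl (n + 1)
  rw [SteinC0, Nat.add_sub_cancel, poissonCDF_eq_mul_poissonCDFRatio hl]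
  push_cast
  exact mul_div_cancel_left₀ _ (by positivity)

lemma fwdDiff_steinSolution_pred (hl : 0 < l) (hk : 2 ≤ k) :
    Δ_[1] (steinSolution l k) (k - 1) =
      SteinC0 l k * (1 - poissonCDF l (k - 2) * l / ((k - 1) * poissonCDF l (k - 1))) := by
  have hU := (poissonCDFRatio_pos hl (j := k) (by omega)).ne'
  rw [fwdDiff_steinSolution_of_lt (sub_one_lt _), steinC0_eq_poissonCDFRatio hl (by omega)]
  obtain ⟨n, rfl⟩ := Nat.exists_eq_add_of_le' hk
  have hp := poissonPMF_pos hl (n + 1)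
  have hrec := succ_mul_poissonPMF_succ l (n + 1)
  simp only [Nat.add_sub_cancel, show n + 2 - 1 = n + 1 from rfl,
    poissonCDF_eq_mul_poissonCDFRatio hl, hrec, fwdDiff]
  push_cast at hU ⊢
  rw [show (n + 2 - 1 : ℤ) = n + 1 by ring, show (n + 1 + 1 : ℤ) = n + 2 by ring,
    show (n + 2 - 1 : ℝ) = n + 1 by ring]
  field_simp

lemma fwdDiff_steinSolution_self (hl : 0 < l) (hk : 1 ≤ k) :
    Δ_[1] (steinSolution l k) k =
      SteinC0 l k * (poissonTail l (k + 1) * k / (poissonTail l k * l) - 1) := by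
  have hV := (poissonTailRatio_pos l (j := k) (by omega)).ne'
  rw [fwdDiff_steinSolution_of_ge hk le_rfl, steinC0_eq_poissonCDFRatio hl hk]
  obtain ⟨n, rfl⟩ := Nat.exists_eq_add_of_le' hk
  have hp := poissonPMF_pos hl (n + 1)
  have hrec := succ_mul_poissonPMF_succ l (n + 1)
  simp only [poissonTail_eq_mul_poissonTailRatio hl, hrec, fwdDiff]
  push_cast at hV ⊢
  field_simp

lemma steinC2_eq_fwdDiff (hl : 0 < l) (hk : 2 ≤ k) :
    SteinC2 l k = Δ_[1] (steinSolution l k) (k - 1) - Δ_[1] (steinSolution l k) k := by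
  rw [fwdDiff_steinSolution_pred hl hk, fwdDiff_steinSolution_self hl (by omega), SteinC2]
  ring

lemma steinC1_eq_max_fwdDiff (hl : 0 < l) (hk : 2 ≤ k) :
    SteinC1 l k = max (Δ_[1] (steinSolution l k) (k - 1)) (-Δ_[1] (steinSolution l k) k) := by
  have hC0 : 0 ≤ SteinC0 l k :=
    (poissonCDFRatio_nonneg l k).trans_eq (steinC0_eq_poissonCDFRatio hl (by omega)).symm
  rw [fwdDiff_steinSolution_pred hl hk, fwdDiff_steinSolution_self hl (by omega), ← mul_neg,
    neg_sub, ← mul_max_of_nonneg _ _ hC0, max_sub_sub_left, SteinC1]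

lemma abs_steinSolution_le (hl : 0 < l) (hk : 1 ≤ k) (j : ℤ) :
    |steinSolution l k j| ≤ steinSolution l k k :=
  (abs_of_nonneg (steinSolution_nonneg l k j)).trans_le
    ((isConvexCusp_steinSolution hl hk).le_apex j)

lemma abs_fwdDiff_steinSolution_le (hl : 0 < l) (hk : 2 ≤ k) (j : ℤ) :
    |Δ_[1] (steinSolution l k) j| ≤ SteinC1 l k := by
  obtain ⟨hmin, hmax⟩ := (isConvexCusp_steinSolution hl (one_le_two.trans hk)).fwdDiff_mem_Icc j
  rw [steinC1_eq_max_fwdDiff hl hk, abs_le', le_max_iff, le_max_iff]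
  exact ⟨Or.inl hmax, Or.inr (neg_le_neg hmin)⟩

lemma isJordanBounded_fwdDiff_steinSolution (hl : 0 < l) (hk : 2 ≤ k) :
    IsJordanBounded (SteinC2 l k) (Δ_[1] (steinSolution l k)) :=
  steinC2_eq_fwdDiff hl hk ▸ (isConvexCusp_steinSolution hl
    (one_le_two.trans hk)).isJordanBounded_fwdDiff

end SteinSolution

section DiscreteTaylor

lemma sub_eq_sum_range_fwdDiff (f : ℕ → ℝ) (n m : ℕ) :
    f (n + m) - f n = ∑ i ∈ range m, Δ_[1] f (n + i) :=
  (sum_range_sub (fun i => f (n + i)) m).symm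

lemma fwdDiff_taylor (f : ℕ → ℝ) (n r z : ℕ) :
    f (n + r + z) - f (n + r) - z * Δ_[1] f n =
      ∑ p ∈ (range z).sigma fun i => range (r + i), Δ_[1] (Δ_[1] f) (n + p.2) := by
  simp only [sum_sigma, ← sub_eq_sum_range_fwdDiff, sum_sub_distrib, sum_const, card_range,
    nsmul_eq_mul, ← add_assoc]

lemma card_sigma_range_add (r z : ℕ) :
    (#((range z).sigma fun i => range (r + i)) : ℝ) = z * ((r + z) - z / 2 - 1 / 2) := by
  simp only [card_sigma, card_range]
  push_cast
  induction z with
  | zero => simp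
  | succ z ih => rw [sum_range_succ, ih]; push_cast; ring

end DiscreteTaylor

section LocalEstimate

variable {Ω τ ι : Type*} [MeasurableSpace Ω] [MeasurableSpace τ] [Countable τ]
  [MeasurableSingletonClass τ] {P : Measure Ω}

lemma abs_integral_le_of_fibers {T : Ω → τ} (hT : Measurable T) {H b : Ω → ℝ}
    (hH : Integrable H P) (hb : Integrable b P)
    (h : ∀ t, |∫ ω in T ⁻¹' {t}, H ω ∂P| ≤ ∫ ω in T ⁻¹' {t}, b ω ∂P) :
    |∫ ω, H ω ∂P| ≤ ∫ ω, b ω ∂P := by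
  have hsum {G : Ω → ℝ} (hG : Integrable G P) :
      HasSum (fun t => ∫ ω in T ⁻¹' {t}, G ω ∂P) (∫ ω, G ω ∂P) := by
    have hcover : ⋃ t, T ⁻¹' {t} = Set.univ := Set.iUnion_eq_univ_iff.2 fun ω => ⟨T ω, rfl⟩
    rw [← setIntegral_univ (f := G), ← hcover]
    exact hasSum_integral_iUnion (fun t => hT (measurableSet_singleton t))
      (pairwise_disjoint_fiber T) hG.integrableOn
  rw [abs_le]
  exact ⟨hasSum_le (fun t => neg_le_of_abs_le (h t)) (hsum hb).neg (hsum hH),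
    hasSum_le (fun t => le_of_abs_le (h t)) (hsum hH) (hsum hb)⟩

variable {T : Ω → τ} {v : Ω → ℕ} {h : ℕ → ℝ} {θ C : ℝ}

lemma integrable_mul_sum_comp (hT : Measurable T) (hv : Measurable v) (hh : ∀ n, |h n| ≤ C)
    (φ : τ → ℝ) (s : τ → Finset ι) (c : ι → ℕ)
    (hint : Integrable (fun ω => φ (T ω) * #(s (T ω))) P) :
    Integrable (fun ω => φ (T ω) * ∑ i ∈ s (T ω), h (v ω + c i)) P := by
  refine (hint.abs.mul_const C).mono' ?_ (.of_forall fun ω => ?_)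
  · exact ((measurable_of_countable fun p : τ × ℕ =>
      φ p.1 * ∑ i ∈ s p.1, h (p.2 + c i)).comp (hT.prodMk hv)).aestronglyMeasurable
  · rw [norm_mul, norm_eq_abs, abs_mul, Nat.abs_cast, mul_assoc, ← nsmul_eq_mul]
    exact mul_le_mul_of_nonneg_left
      ((norm_sum_le_of_le _ fun i _ => hh _).trans_eq (sum_const _)) (abs_nonneg _)

lemma abs_integral_mul_sum_fwdDiff_le [IsFiniteMeasure P] (hT : Measurable T) (hv : Measurable v)
    (hθ : ∀ n t, P.real (v ⁻¹' {n} ∩ T ⁻¹' {t}) ≤ θ * P.real (T ⁻¹' {t}))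
    (hh : IsJordanBounded C h) (φ : τ → ℝ) (s : τ → Finset ι) (c : ι → ℕ)
    (hint : Integrable (fun ω => φ (T ω) * #(s (T ω))) P) :
    |∫ ω, φ (T ω) * ∑ i ∈ s (T ω), Δ_[1] h (v ω + c i) ∂P| ≤
      C * θ * ∫ ω, |φ (T ω)| * #(s (T ω)) ∂P := by
  have hfiber (t : τ) (i : ι) :
      |∫ ω in T ⁻¹' {t}, Δ_[1] h (v ω + c i) ∂P| ≤ C * (θ * P.real (T ⁻¹' {t})) := by
    have hshift (n : ℕ) : Δ_[1] h (n + c i) = Δ_[1] (h ∘ (· + c i)) n := by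
      simp only [fwdDiff, Function.comp_apply, add_right_comm]
    simp only [hshift]
    refine (hh.comp_monotone (add_left_mono)).abs_integral_fwdDiff_comp_le hv fun n => ?_
    exact (measureReal_restrict_apply (hv (measurableSet_singleton n))).trans_le (hθ n t)
  rw [← integral_const_mul]
  have hint' : Integrable (fun ω => |φ (T ω)| * #(s (T ω))) P := by
    simpa only [abs_mul, Nat.abs_cast] using hint.abs
  refine abs_integral_le_of_fibers hT
    (integrable_mul_sum_comp hT hv hh.abs_fwdDiff_le φ s c hint) (hint'.const_mul _) fun t => ?_
  have hset := hT (measurableSet_singleton t)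
  have hL : ∫ ω in T ⁻¹' {t}, φ (T ω) * ∑ i ∈ s (T ω), Δ_[1] h (v ω + c i) ∂P =
      φ t * ∑ i ∈ s t, ∫ ω in T ⁻¹' {t}, Δ_[1] h (v ω + c i) ∂P := by
    rw [← integral_finsetSum _ fun i _ =>
      integrable_comp_of_abs_le (f := fun n => Δ_[1] h (n + c i)) (fun n => hh.abs_fwdDiff_le _) hv,
      ← integral_const_mul]
    exact setIntegral_congr_fun hset fun ω (hω : T ω = t) => by simp only [hω]
  have hR : ∫ ω in T ⁻¹' {t}, C * θ * (|φ (T ω)| * #(s (T ω))) ∂P =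
      |φ t| * #(s t) • (C * (θ * P.real (T ⁻¹' {t}))) := by
    rw [setIntegral_congr_fun hset (g := fun _ => C * θ * (|φ t| * #(s t)))
      fun ω (hω : T ω = t) => by simp only [hω], setIntegral_const, smul_eq_mul, nsmul_eq_mul]
    ring
  rw [hL, hR, abs_mul]
  refine mul_le_mul_of_nonneg_left ?_ (abs_nonneg _)
  exact (abs_sum_le_sum_abs _ _).trans (sum_le_card_nsmul _ _ _ fun i _ => hfiber t i)

lemma abs_integral_comp_add_sub_le [IsFiniteMeasure P] (hT : Measurable T) (hv : Measurable v)
    (hθ : ∀ n t, P.real (v ⁻¹' {n} ∩ T ⁻¹' {t}) ≤ θ * P.real (T ⁻¹' {t}))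
    (hh : IsJordanBounded C h) (u : τ → ℕ) (hu : Integrable (fun ω => (u (T ω) : ℝ)) P) :
    |∫ ω, h (v ω + u (T ω)) ∂P - ∫ ω, h (v ω) ∂P| ≤ C * θ * ∫ ω, (u (T ω) : ℝ) ∂P := by
  have hvu : Measurable fun ω => v ω + u (T ω) := hv.add ((measurable_of_countable u).comp hT)
  have key := abs_integral_mul_sum_fwdDiff_le hT hv hθ hh (fun _ => 1) (fun t => range (u t)) id
    (by simpa using hu)
  simp only [id_eq, ← sub_eq_sum_range_fwdDiff, card_range, one_mul, abs_one] at key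
  rwa [integral_sub (integrable_comp_of_abs_le hh.abs_le hvu)
    (integrable_comp_of_abs_le hh.abs_le hv)] at key

variable [IsProbabilityMeasure P] {x r z : Ω → ℕ} {φ f : ℕ → ℝ} {D : ℝ}

lemma abs_integral_mul_comp_sub_le
    (hx : Measurable x) (hr : Measurable r) (hz : Measurable z) (hv : Measurable v)
    (hθ : ∀ n t, P.real (v ⁻¹' {n} ∩ (fun ω => (x ω, r ω, z ω)) ⁻¹' {t}) ≤
      θ * P.real ((fun ω => (x ω, r ω, z ω)) ⁻¹' {t}))
    (hxvr : IndepFun x (fun ω => v ω + r ω) P) (hxzv : IndepFun (fun ω => (x ω, z ω)) v P)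
    (hφ0 : ∫ ω, φ (x ω) ∂P = 0) (hφ : Integrable (fun ω => φ (x ω)) P)
    (hφz : Integrable (fun ω => φ (x ω) * z ω) P)
    (hφrz : Integrable (fun ω => φ (x ω) * (z ω * ((r ω + z ω) - z ω / 2 - 1 / 2))) P)
    (hf : ∀ n, |f n| ≤ D) (hΔf : IsJordanBounded C (Δ_[1] f)) :
    |∫ ω, φ (x ω) * f (v ω + r ω + z ω) ∂P -
        (∫ ω, φ (x ω) * z ω ∂P) * ∫ ω, Δ_[1] f (v ω) ∂P| ≤
      C * θ * ∫ ω, |φ (x ω)| * (z ω * ((r ω + z ω) - z ω / 2 - 1 / 2)) ∂P := by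
  have hT : Measurable fun ω => (x ω, r ω, z ω) := hx.prodMk (hr.prodMk hz)
  have hindep0 : ∫ ω, φ (x ω) * f (v ω + r ω) ∂P = 0 := by
    rw [hxvr.integral_fun_comp_mul_comp (f := φ) (g := f) hx.aemeasurable (hv.add hr).aemeasurable
      (measurable_of_countable _).aestronglyMeasurable
      (measurable_of_countable _).aestronglyMeasurable, hφ0, zero_mul]
  have hindep1 : ∫ ω, φ (x ω) * z ω * Δ_[1] f (v ω) ∂P =
      (∫ ω, φ (x ω) * z ω ∂P) * ∫ ω, Δ_[1] f (v ω) ∂P :=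
    hxzv.integral_fun_comp_mul_comp (f := fun p => φ p.1 * p.2) (g := Δ_[1] f)
      (hx.prodMk hz).aemeasurable hv.aemeasurable
      (measurable_of_countable _).aestronglyMeasurable
      (measurable_of_countable _).aestronglyMeasurable
  have hbdd {g : ℕ → ℝ} {E : ℝ} (hg : ∀ n, |g n| ≤ E) {w : Ω → ℕ} (hw : Measurable w) {ξ : Ω → ℝ}
      (hξ : Integrable ξ P) : Integrable (fun ω => ξ ω * g (w ω)) P :=
    hξ.mul_bdd ((measurable_of_countable g).comp hw).aestronglyMeasurable (.of_forall fun ω => hg _)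
  have hint0 : Integrable (fun ω => φ (x ω) * f (v ω + r ω)) P := hbdd hf (hv.add hr) hφ
  have hint1 : Integrable (fun ω => φ (x ω) * f (v ω + r ω + z ω)) P :=
    hbdd hf ((hv.add hr).add hz) hφ
  have hintd : Integrable (fun ω => φ (x ω) * f (v ω + r ω + z ω) - φ (x ω) * f (v ω + r ω)) P :=
    hint1.sub hint0
  have hrem := abs_integral_mul_sum_fwdDiff_le hT hv hθ hΔf (fun t => φ t.1)
    (fun t => (range t.2.2).sigma fun i => range (t.2.1 + i)) Sigma.snd
    (by simpa only [card_sigma_range_add] using hφrz)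
  simp only [card_sigma_range_add, ← fwdDiff_taylor, mul_sub, ← mul_assoc] at hrem ⊢
  rwa [integral_sub hintd (hbdd hΔf.abs_le hv hφz), integral_sub hint1 hint0, hindep0, hindep1,
    sub_zero] at hrem

/- Condition on `(x, r, z)`: by the two independences and the discrete Taylor formula only second
differences of `f` at shifts of `v` remain, and `v` puts mass at most `θ` on each point. -/
lemma abs_integral_mul_comp_sub_integral_fwdDiff_le
    (hx : Measurable x) (hr : Measurable r) (hz : Measurable z) (hv : Measurable v)
    (hθ : ∀ n t, P.real (v ⁻¹' {n} ∩ (fun ω => (x ω, r ω, z ω)) ⁻¹' {t}) ≤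
      θ * P.real ((fun ω => (x ω, r ω, z ω)) ⁻¹' {t}))
    (hxvr : IndepFun x (fun ω => v ω + r ω) P) (hxzv : IndepFun (fun ω => (x ω, z ω)) v P)
    (hφ0 : ∫ ω, φ (x ω) ∂P = 0) (hφ : Integrable (fun ω => φ (x ω)) P)
    (hφz : Integrable (fun ω => φ (x ω) * z ω) P)
    (hrz : Integrable (fun ω => ((r ω + z ω : ℕ) : ℝ)) P)
    (hφrz : Integrable (fun ω => φ (x ω) * (z ω * ((r ω + z ω) - z ω / 2 - 1 / 2))) P)
    (hf : ∀ n, |f n| ≤ D) (hΔf : IsJordanBounded C (Δ_[1] f)) :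
    |∫ ω, φ (x ω) * f (v ω + r ω + z ω) ∂P -
        (∫ ω, φ (x ω) * z ω ∂P) * ∫ ω, Δ_[1] f (v ω + r ω + z ω) ∂P| ≤
      C * θ * (|∫ ω, φ (x ω) * z ω ∂P| * ∫ ω, ((r ω + z ω : ℕ) : ℝ) ∂P +
        ∫ ω, |φ (x ω)| * (z ω * ((r ω + z ω) - z ω / 2 - 1 / 2)) ∂P) := by
  have hmean := abs_integral_comp_add_sub_le (hx.prodMk (hr.prodMk hz)) hv hθ hΔf
    (fun t => t.2.1 + t.2.2) hrz
  have hprod := abs_integral_mul_comp_sub_le hx hr hz hv hθ hxvr hxzv hφ0 hφ hφz hφrz hf hΔf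
  simp only [← add_assoc] at hmean
  set m := ∫ ω, φ (x ω) * z ω ∂P
  calc |_ - m * ∫ ω, Δ_[1] f (v ω + r ω + z ω) ∂P|
      ≤ |_ - m * ∫ ω, Δ_[1] f (v ω) ∂P| + |m * ∫ ω, Δ_[1] f (v ω) ∂P - m * _| :=
        abs_sub_le _ _ _
    _ ≤ _ := by
        rw [← mul_sub, abs_mul, abs_sub_comm (∫ ω, Δ_[1] f (v ω) ∂P)]
        linarith [mul_le_mul_of_nonneg_left hmean (abs_nonneg m)]

end LocalEstimate

section LocalDependence

variable {Ω I : Type*} {mΩ : MeasurableSpace Ω} {P : Measure Ω}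

lemma measureReal_inter_le_of_condExp_le [IsFiniteMeasure P] {m : MeasurableSpace Ω} (hm : m ≤ mΩ)
    {S E : Set Ω} (hS : MeasurableSet[mΩ] S) (hE : MeasurableSet[m] E) {θ : ℝ}
    (hθ : ∀ᵐ ω ∂P, (P[S.indicator (fun _ => (1 : ℝ)) | m]) ω ≤ θ) :
    P.real (S ∩ E) ≤ θ * P.real E := by
  have hint : Integrable (S.indicator fun _ => (1 : ℝ)) P := (integrable_const 1).indicator hS
  calc P.real (S ∩ E) = ∫ ω in E, S.indicator (fun _ => (1 : ℝ)) ω ∂P := by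
        rw [integral_indicator_const _ hS, measureReal_restrict_apply hS, smul_eq_mul, mul_one]
    _ = ∫ ω in E, (P[S.indicator (fun _ => (1 : ℝ)) | m]) ω ∂P :=
        (setIntegral_condExp hm hint hE).symm
    _ ≤ ∫ _ in E, θ ∂P :=
        setIntegral_mono_ae integrable_condExp.integrableOn (integrable_const θ) hθ
    _ = θ * P.real E := by rw [setIntegral_const, smul_eq_mul, mul_comm]

lemma covariance_eq_integral_centered_mul [IsProbabilityMeasure P] {X Y : Ω → ℝ}
    (hX : MemLp X 2 P) (hY : MemLp Y 2 P) : cov[X, Y; P] = ∫ ω, (X ω - P[X]) * Y ω ∂P := by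
  have hcenter : MemLp (fun ω => X ω - P[X]) 2 P := hX.sub (memLp_const _)
  have hprod : Integrable (fun ω => (X ω - P[X]) * Y ω) P := hcenter.integrable_mul hY
  have hzero : ∫ ω, (X ω - P[X]) ∂P = 0 := by
    rw [← integral_sub_average P X, average_eq_integral]
  simp only [covariance, mul_sub]
  rw [integral_sub hprod ((hcenter.integrable one_le_two).mul_const _), integral_mul_const, hzero,
    zero_mul, sub_zero]

/-- The local dependence condition (LD2): `X i` is independent of the variables outside its
neighbourhood `A i`, and the variables in `A i` are jointly independent of those outside the larger
neighbourhood `B i`. -/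
structure IsLocallyDependent (X : I → Ω → ℕ) (A B : I → Finset I) (P : Measure Ω) : Prop where
  mem : ∀ i, i ∈ A i
  subset : ∀ i, A i ⊆ B i
  indepFun_compl : ∀ i, IndepFun (X i) (fun ω => fun j : {j : I // j ∉ A i} => X j.1 ω) P
  indepFun_nhd_compl : ∀ i, IndepFun (fun ω => fun j : {j : I // j ∈ A i} => X j.1 ω)
    (fun ω => fun j : {j : I // j ∉ B i} => X j.1 ω) P

variable [Fintype I] {X : I → Ω → ℕ} {A B : I → Finset I}

lemma memLp_two_of_integrable_sq_sum (hX : ∀ i, Measurable (X i))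
    (hW : Integrable (fun ω => ((∑ i, X i ω : ℕ) : ℝ) ^ 2) P) (i : I) :
    MemLp (fun ω => (X i ω : ℝ)) 2 P := by
  have hcast : Measurable (Nat.cast : ℕ → ℝ) := measurable_of_countable _
  have hsum : Measurable fun ω => ∑ i, X i ω := Finset.measurable_fun_sum univ fun i _ => hX i
  refine ((memLp_two_iff_integrable_sq (hcast.comp hsum).aestronglyMeasurable).2 hW).mono
    (hcast.comp (hX i)).aestronglyMeasurable (.of_forall fun ω => ?_)
  simp only [Function.comp_apply, Real.norm_natCast]
  exact_mod_cast single_le_sum (f := fun j => X j ω) (fun _ _ => Nat.zero_le _) (mem_univ i)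

namespace IsLocallyDependent

lemma indepFun_sum_compl [DecidableEq I] (h : IsLocallyDependent X A B P) (i : I) :
    IndepFun (X i) (fun ω => ∑ j ∈ (A i)ᶜ, X j ω) P := by
  simp only [fun ω => sum_subtype (A i)ᶜ (fun _ => mem_compl) fun j => X j ω]
  exact (h.indepFun_compl i).comp measurable_id (measurable_of_countable fun y => ∑ j, y j)

lemma indepFun_prodMk_sum_compl [DecidableEq I] (h : IsLocallyDependent X A B P) (i : I) :
    IndepFun (fun ω => (X i ω, ∑ j ∈ A i, X j ω)) (fun ω => ∑ j ∈ (B i)ᶜ, X j ω) P := by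
  simp only [fun ω => sum_subtype (B i)ᶜ (fun _ => mem_compl) fun j => X j ω,
    fun ω => sum_subtype (A i) (fun _ => Iff.rfl) fun j => X j ω]
  exact (h.indepFun_nhd_compl i).comp (measurable_of_countable fun y => (y ⟨i, h.mem i⟩, ∑ j, y j))
    (measurable_of_countable fun y => ∑ j, y j)

lemma sum_integral_centered_mul_eq_variance [IsProbabilityMeasure P]
    (h : IsLocallyDependent X A B P) (hX : ∀ i, MemLp (fun ω => (X i ω : ℝ)) 2 P) :
    ∑ i, ∫ ω, ((X i ω : ℝ) - P[fun ω => (X i ω : ℝ)]) * ∑ j ∈ A i, (X j ω : ℝ) ∂P =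
      Var[fun ω => ∑ i, (X i ω : ℝ); P] := by
  classical
  have hsum (S : Finset I) : MemLp (fun ω => ∑ j ∈ S, (X j ω : ℝ)) 2 P :=
    memLp_finsetSum S fun j _ => hX j
  have hcov (i : I) : cov[fun ω => (X i ω : ℝ), fun ω => ∑ j ∈ A i, (X j ω : ℝ); P] =
      cov[fun ω => (X i ω : ℝ), fun ω => ∑ j, (X j ω : ℝ); P] := by
    have hsplit : (fun ω => ∑ j, (X j ω : ℝ)) =
        (fun ω => ∑ j ∈ A i, (X j ω : ℝ)) + fun ω => ∑ j ∈ (A i)ᶜ, (X j ω : ℝ) :=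
      funext fun ω => (sum_add_sum_compl (A i) fun j => (X j ω : ℝ)).symm
    have hindep : IndepFun (fun ω => (X i ω : ℝ)) (fun ω => ∑ j ∈ (A i)ᶜ, (X j ω : ℝ)) P := by
      simpa only [← Nat.cast_sum, Function.comp_def] using (h.indepFun_sum_compl i).comp
        (measurable_of_countable (Nat.cast : ℕ → ℝ)) (measurable_of_countable (Nat.cast : ℕ → ℝ))
    rw [hsplit, covariance_add_right (hX i) (hsum _) (hsum _),
      hindep.covariance_eq_zero (hX i) (hsum _), add_zero]
  simp only [← covariance_eq_integral_centered_mul (hX _) (hsum _), hcov]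
  rw [← covariance_fun_sum_left hX (hsum univ),
    covariance_self (hsum univ).aestronglyMeasurable.aemeasurable]

lemma measureReal_inter_preimage_le [DecidableEq I] [IsFiniteMeasure P]
    (h : IsLocallyDependent X A B P) (hX : ∀ i, Measurable (X i)) {i : I}
    {m : MeasurableSpace Ω} (hm : m ≤ mΩ) (hXm : ∀ j ∈ B i, Measurable[m] (X j)) {θ : ℝ}
    (hθ : ∀ n, ∀ᵐ ω ∂P, (P[{ω' | ∑ j, X j ω' = n}.indicator (fun _ => (1 : ℝ)) | m]) ω ≤ θ)
    (n : ℕ) (t : ℕ × ℕ × ℕ) :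
    P.real ((fun ω => ∑ j ∈ (B i)ᶜ, X j ω) ⁻¹' {n} ∩
        (fun ω => (X i ω, ∑ j ∈ B i \ A i, X j ω, ∑ j ∈ A i, X j ω)) ⁻¹' {t}) ≤
      θ * P.real ((fun ω => (X i ω, ∑ j ∈ B i \ A i, X j ω, ∑ j ∈ A i, X j ω)) ⁻¹' {t}) := by
  have hT : Measurable[m] fun ω => (X i ω, ∑ j ∈ B i \ A i, X j ω, ∑ j ∈ A i, X j ω) :=
    (hXm i (h.subset i (h.mem i))).prodMk
      ((Finset.measurable_fun_sum _ fun j hj => hXm j (sdiff_subset hj)).prodMk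
        (Finset.measurable_fun_sum _ fun j hj => hXm j (h.subset i hj)))
  refine le_trans (measureReal_mono ?_) (measureReal_inter_le_of_condExp_le hm
    ((Finset.measurable_fun_sum univ fun j _ => hX j) (measurableSet_singleton _))
    (hT (measurableSet_singleton t)) (hθ (n + t.2.1 + t.2.2)))
  rintro ω ⟨hn : ∑ j ∈ (B i)ᶜ, X j ω = n, rfl⟩
  exact ⟨by simp only [Set.mem_preimage, ← hn, add_assoc, sum_sdiff (h.subset i), sum_compl_add_sum,
    Set.mem_singleton_iff], rfl⟩

lemma abs_integral_centered_mul_comp_sum_sub_le [DecidableEq I] [IsProbabilityMeasure P]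
    (h : IsLocallyDependent X A B P) (hX : ∀ i, Measurable (X i))
    (hX2 : ∀ i, MemLp (fun ω => (X i ω : ℝ)) 2 P) {i : I}
    (hI : Integrable (fun ω => |(X i ω : ℝ) - P[fun ω => (X i ω : ℝ)]| * (∑ j ∈ A i, (X j ω : ℝ)) *
      ((∑ j ∈ B i, (X j ω : ℝ)) - (∑ j ∈ A i, (X j ω : ℝ)) / 2 - 1 / 2)) P)
    {θ : ℝ} (hθ : ∀ n t, P.real ((fun ω => ∑ j ∈ (B i)ᶜ, X j ω) ⁻¹' {n} ∩
        (fun ω => (X i ω, ∑ j ∈ B i \ A i, X j ω, ∑ j ∈ A i, X j ω)) ⁻¹' {t}) ≤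
      θ * P.real ((fun ω => (X i ω, ∑ j ∈ B i \ A i, X j ω, ∑ j ∈ A i, X j ω)) ⁻¹' {t}))
    {f : ℕ → ℝ} {C D : ℝ} (hf : ∀ n, |f n| ≤ D) (hΔf : IsJordanBounded C (Δ_[1] f)) :
    |∫ ω, ((X i ω : ℝ) - P[fun ω => (X i ω : ℝ)]) * f (∑ j, X j ω) ∂P -
      (∫ ω, ((X i ω : ℝ) - P[fun ω => (X i ω : ℝ)]) * ∑ j ∈ A i, (X j ω : ℝ) ∂P) *
        ∫ ω, Δ_[1] f (∑ j, X j ω) ∂P| ≤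
      C * (θ * (|∫ ω, ((X i ω : ℝ) - P[fun ω => (X i ω : ℝ)]) * ∑ j ∈ A i, (X j ω : ℝ) ∂P| *
            (∫ ω, ∑ j ∈ B i, (X j ω : ℝ) ∂P)
          + ∫ ω, |(X i ω : ℝ) - P[fun ω => (X i ω : ℝ)]| * (∑ j ∈ A i, (X j ω : ℝ)) *
              ((∑ j ∈ B i, (X j ω : ℝ)) - (∑ j ∈ A i, (X j ω : ℝ)) / 2 - 1 / 2) ∂P)) := by
  set c := P[fun ω => (X i ω : ℝ)]
  have hsum (S : Finset I) : Measurable fun ω => ∑ j ∈ S, X j ω :=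
    Finset.measurable_fun_sum S fun j _ => hX j
  have hsum2 (S : Finset I) : MemLp (fun ω => ∑ j ∈ S, (X j ω : ℝ)) 2 P :=
    memLp_finsetSum S fun j _ => hX2 j
  have hsdiff (ω : Ω) : ∑ j ∈ B i \ A i, X j ω + ∑ j ∈ A i, X j ω = ∑ j ∈ B i, X j ω :=
    sum_sdiff (h.subset i)
  have hsdiff' (ω : Ω) :
      ∑ j ∈ B i \ A i, (X j ω : ℝ) + ∑ j ∈ A i, (X j ω : ℝ) = ∑ j ∈ B i, (X j ω : ℝ) :=
    sum_sdiff (h.subset i)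
  have hcenter2 : MemLp (fun ω => (X i ω : ℝ) - c) 2 P := (hX2 i).sub (memLp_const c)
  have hcenter : ∫ ω, ((X i ω : ℝ) - c) ∂P = 0 := by
    rw [← integral_sub_average P fun ω => (X i ω : ℝ), average_eq_integral]
  have hcompl : IndepFun (X i) (fun ω => ∑ j ∈ (B i)ᶜ, X j ω + ∑ j ∈ B i \ A i, X j ω) P := by
    have hunion (ω : Ω) :
        ∑ j ∈ (B i)ᶜ, X j ω + ∑ j ∈ B i \ A i, X j ω = ∑ j ∈ (A i)ᶜ, X j ω :=
      Nat.add_right_cancel (m := ∑ j ∈ A i, X j ω) (by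
        rw [add_assoc, hsdiff, sum_compl_add_sum, sum_compl_add_sum])
    simpa only [hunion] using h.indepFun_sum_compl i
  have hprod : Integrable (fun ω => ((X i ω : ℝ) - c) * ∑ j ∈ A i, (X j ω : ℝ)) P :=
    hcenter2.integrable_mul (hsum2 (A i))
  have hmoment : Integrable (fun ω => ((X i ω : ℝ) - c) * (∑ j ∈ A i, (X j ω : ℝ)) *
      ((∑ j ∈ B i, (X j ω : ℝ)) - (∑ j ∈ A i, (X j ω : ℝ)) / 2 - 1 / 2)) P := by
    refine hI.congr' (by fun_prop) (.of_forall fun ω => ?_)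
    simp only [norm_mul, norm_eq_abs, abs_abs]
  have key := abs_integral_mul_comp_sub_integral_fwdDiff_le (φ := fun n => n - c) (hX i)
    (hsum (B i \ A i)) (hsum (A i)) (hsum (B i)ᶜ) hθ hcompl (h.indepFun_prodMk_sum_compl i)
    hcenter (hcenter2.integrable one_le_two)
    (by simpa only [Nat.cast_sum] using hprod)
    (by simpa only [hsdiff, Nat.cast_sum] using (hsum2 (B i)).integrable one_le_two)
    (by simpa only [Nat.cast_sum, hsdiff', mul_assoc] using hmoment) hf hΔf
  simpa only [add_assoc, hsdiff, sum_compl_add_sum, Nat.cast_sum, hsdiff', mul_assoc] using key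

lemma abs_integral_centered_sum_mul_comp_sub_le [IsProbabilityMeasure P]
    (h : IsLocallyDependent X A B P) (hX : ∀ i, Measurable (X i))
    (hX2 : ∀ i, MemLp (fun ω => (X i ω : ℝ)) 2 P)
    (hI : ∀ i, Integrable (fun ω => |(X i ω : ℝ) - P[fun ω => (X i ω : ℝ)]| *
      (∑ j ∈ A i, (X j ω : ℝ)) *
        ((∑ j ∈ B i, (X j ω : ℝ)) - (∑ j ∈ A i, (X j ω : ℝ)) / 2 - 1 / 2)) P)
    {F : I → MeasurableSpace Ω} (hF : ∀ i, F i ≤ mΩ) (hXF : ∀ i, ∀ j ∈ B i, Measurable[F i] (X j))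
    {θ : I → ℝ} (hθ : ∀ i n, ∀ᵐ ω ∂P,
      (P[{ω' | ∑ j, X j ω' = n}.indicator (fun _ => (1 : ℝ)) | F i]) ω ≤ θ i)
    {f : ℕ → ℝ} {C D : ℝ} (hf : ∀ n, |f n| ≤ D) (hΔf : IsJordanBounded C (Δ_[1] f)) :
    |∫ ω, (∑ i, (X i ω : ℝ) - ∫ ω, ∑ i, (X i ω : ℝ) ∂P) * f (∑ i, X i ω) ∂P -
      Var[fun ω => ∑ i, (X i ω : ℝ); P] * ∫ ω, Δ_[1] f (∑ i, X i ω) ∂P| ≤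
      C * ∑ i, θ i *
        (|∫ ω, ((X i ω : ℝ) - P[fun ω => (X i ω : ℝ)]) * ∑ j ∈ A i, (X j ω : ℝ) ∂P| *
            (∫ ω, ∑ j ∈ B i, (X j ω : ℝ) ∂P)
          + ∫ ω, |(X i ω : ℝ) - P[fun ω => (X i ω : ℝ)]| * (∑ j ∈ A i, (X j ω : ℝ)) *
              ((∑ j ∈ B i, (X j ω : ℝ)) - (∑ j ∈ A i, (X j ω : ℝ)) / 2 - 1 / 2) ∂P) := by
  classical
  have hX1 (i : I) : Integrable (fun ω => (X i ω : ℝ)) P := (hX2 i).integrable one_le_two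
  have hfW : Measurable fun ω => f (∑ i, X i ω) :=
    (measurable_of_countable f).comp (Finset.measurable_fun_sum univ fun i _ => hX i)
  have hint (i : I) :
      Integrable (fun ω => ((X i ω : ℝ) - P[fun ω => (X i ω : ℝ)]) * f (∑ j, X j ω)) P :=
    ((hX1 i).sub (integrable_const _)).mul_bdd hfW.aestronglyMeasurable (.of_forall fun _ => hf _)
  have hexpand : ∫ ω, (∑ i, (X i ω : ℝ) - ∫ ω, ∑ i, (X i ω : ℝ) ∂P) * f (∑ i, X i ω) ∂P =
      ∑ i, ∫ ω, ((X i ω : ℝ) - P[fun ω => (X i ω : ℝ)]) * f (∑ j, X j ω) ∂P := by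
    rw [integral_finsetSum _ fun i _ => hX1 i, ← integral_finsetSum _ fun i _ => hint i]
    simp only [← sum_sub_distrib, sum_mul]
  rw [hexpand, ← h.sum_integral_centered_mul_eq_variance hX2, sum_mul, ← sum_sub_distrib, mul_sum]
  refine (abs_sum_le_sum_abs _ _).trans (sum_le_sum fun i _ => ?_)
  exact h.abs_integral_centered_mul_comp_sum_sub_le hX hX2 (hI i)
    (h.measureReal_inter_preimage_le hX (hF i) (hXF i) (hθ i)) hf hΔf

end IsLocallyDependent

end LocalDependence

section SteinBound

lemma fwdDiff_steinSolution_comp_sub (l : ℝ) (k : ℕ) (a : ℤ) :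
    Δ_[1] (fun n : ℕ => steinSolution l k (n - a)) =
      Δ_[1] (steinSolution l k) ∘ fun n : ℕ => (n : ℤ) - a := by
  ext n
  simp only [fwdDiff, Function.comp_apply, Nat.cast_add_one, add_sub_right_comm]

variable {l : ℝ} {k : ℕ}

lemma isJordanBounded_fwdDiff_steinSolution_comp_sub (hl : 0 < l) (hk : 2 ≤ k) (a : ℤ) :
    IsJordanBounded (SteinC2 l k) (Δ_[1] fun n : ℕ => steinSolution l k (n - a)) :=
  fwdDiff_steinSolution_comp_sub l k a ▸ (isJordanBounded_fwdDiff_steinSolution hl hk).comp_monotone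
    fun _ _ h => sub_le_sub_right (Int.ofNat_le.2 h) a

variable {Ω : Type*} [MeasurableSpace Ω] {P : Measure Ω} [IsProbabilityMeasure P] {W : Ω → ℕ}

lemma abs_integral_fwdDiff_steinSolution_comp_sub_le (hl : 0 < l) (hk : 2 ≤ k) (a : ℤ) :
    |∫ ω, Δ_[1] (fun n : ℕ => steinSolution l k (n - a)) (W ω) ∂P| ≤ SteinC1 l k := by
  simp only [fwdDiff_steinSolution_comp_sub, Function.comp_apply]
  simpa only [probReal_univ, mul_one, norm_eq_abs] using norm_integral_le_of_norm_le_const (μ := P)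
    (f := fun ω => Δ_[1] (steinSolution l k) (W ω - a))
    (.of_forall fun ω => abs_fwdDiff_steinSolution_le hl hk _)

lemma one_sub_measureReal_div_poissonTail (hl : 0 < l) (hk : 1 ≤ k) (a : ℤ) (hW : Measurable W)
    (hW1 : Integrable (fun ω => (W ω : ℝ)) P) :
    1 - P.real {ω | (k : ℤ) ≤ W ω - a} / poissonTail l k =
      l * ∫ ω, Δ_[1] (fun n : ℕ => steinSolution l k (n - a)) (W ω) ∂P -
        ∫ ω, (W ω - (a + l)) * steinSolution l k (W ω - a) ∂P := by
  have hS : MeasurableSet {ω | (k : ℤ) ≤ W ω - a} :=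
    hW (DiscreteMeasurableSpace.forall_measurableSet {n : ℕ | (k : ℤ) ≤ n - a})
  have hstein (ω : Ω) : l * Δ_[1] (fun n : ℕ => steinSolution l k (n - a)) (W ω) -
      (W ω - (a + l)) * steinSolution l k (W ω - a) =
        1 - {ω | (k : ℤ) ≤ W ω - a}.indicator (fun _ => 1 / poissonTail l k) ω := by
    have h := steinSolution_equation hl hk (W ω - a)
    push_cast at h
    simp only [Set.indicator_apply, Set.mem_ofPred_eq, fwdDiff, ← h, Nat.cast_add_one,
      add_sub_right_comm]
    ring
  have hbdd (n : ℕ) := abs_steinSolution_le hl hk (n - a)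
  have hΔbdd (n : ℕ) : |Δ_[1] (fun n : ℕ => steinSolution l k (n - a)) n| ≤
      steinSolution l k k + steinSolution l k k :=
    (abs_sub _ _).trans (add_le_add (hbdd _) (hbdd _))
  have hintΔ : Integrable
      (fun ω => l * Δ_[1] (fun n : ℕ => steinSolution l k (n - a)) (W ω)) P :=
    (integrable_comp_of_abs_le hΔbdd hW).const_mul l
  have hint : Integrable (fun ω => (W ω - (a + l)) * steinSolution l k (W ω - a)) P :=
    (hW1.sub (integrable_const _)).mul_bdd
      ((measurable_of_countable fun n : ℕ =>
        steinSolution l k (n - a)).comp hW).aestronglyMeasurable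
      (.of_forall fun _ => hbdd _)
  rw [← integral_const_mul, ← integral_sub hintΔ hint]
  simp only [hstein]
  rw [integral_sub (integrable_const _) ((integrable_const _).indicator hS),
    integral_indicator_const _ hS, integral_const, probReal_univ, smul_eq_mul, smul_eq_mul, one_mul,
    mul_one_div]

lemma abs_measureReal_div_poissonTail_sub_one_le (hl : 0 < l) (hk : 2 ≤ k) (a : ℤ)
    (hW : Measurable W) (hW1 : Integrable (fun ω => (W ω : ℝ)) P) (σ2 : ℝ) :
    |P.real {ω | (k : ℤ) ≤ W ω - a} / poissonTail l k - 1| ≤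
      |∫ ω, (W ω - (a + l)) * steinSolution l k (W ω - a) ∂P -
        σ2 * ∫ ω, Δ_[1] (fun n : ℕ => steinSolution l k (n - a)) (W ω) ∂P| +
      SteinC1 l k * |l - σ2| := by
  have hmean := abs_integral_fwdDiff_steinSolution_comp_sub_le (P := P) (W := W) hl hk a
  rw [abs_sub_comm, one_sub_measureReal_div_poissonTail hl (one_le_two.trans hk) a hW hW1]
  set I := ∫ ω, Δ_[1] (fun n : ℕ => steinSolution l k (n - a)) (W ω) ∂P
  set J := ∫ ω, (W ω - (a + l)) * steinSolution l k (W ω - a) ∂P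
  calc |l * I - J| = |(l - σ2) * I - (J - σ2 * I)| := by congr 1; ring
    _ ≤ |l - σ2| * |I| + |J - σ2 * I| := (abs_sub _ _).trans_eq (by rw [abs_mul])
    _ ≤ |J - σ2 * I| + SteinC1 l k * |l - σ2| := by
        rw [add_comm, mul_comm |l - σ2|]
        gcongr

end SteinBound

theorem poisson_md_local_dependence_general {Ω : Type*} [mΩ : MeasurableSpace Ω]
    (P : Measure Ω) [IsProbabilityMeasure P] {I : Type*} [Fintype I]
    (X : I → Ω → ℕ) (hXmeas : ∀ i, Measurable (X i))
    (A B : I → Finset I) (hLD2 : IsLocallyDependent X A B P)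
    (W : Ω → ℕ) (hW : W = fun ω => ∑ i, X i ω)
    (μi : I → ℝ) (hμi : ∀ i, μi i = ∫ ω, (X i ω : ℝ) ∂P)
    (μ σ2 : ℝ) (hμ : μ = ∫ ω, (W ω : ℝ) ∂P) (hσ : σ2 = ∫ ω, ((W ω : ℝ) - μ) ^ 2 ∂P)
    (hW2int : Integrable (fun ω => (W ω : ℝ) ^ 2) P)
    (hI2 : ∀ i, Integrable (fun ω =>
      |(X i ω : ℝ) - μi i| * (∑ j ∈ A i, (X j ω : ℝ)) *
        ((∑ j ∈ B i, (X j ω : ℝ)) - (∑ j ∈ A i, (X j ω : ℝ)) / 2 - 1 / 2)) P)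
    (F : I → MeasurableSpace Ω) (hFle : ∀ i, F i ≤ mΩ)
    (hFmeas : ∀ i, ∀ j ∈ B i, Measurable[F i] (X j))
    (θ : I → ℝ) (hθ : ∀ i, ∀ j : ℕ, ∀ᵐ ω ∂P,
      (P[Set.indicator {ω' | W ω' = j} (fun _ => (1 : ℝ)) | F i]) ω ≤ θ i)
    (a : ℤ) (ha : (a : ℝ) < μ) (lam : ℝ) (hlam : lam = μ - a) (k : ℕ) (hk : 2 ≤ k) :
    |P.real {ω | (k : ℤ) ≤ (W ω : ℤ) - a} / poissonTail lam k - 1| ≤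
      SteinC2 lam k * (∑ i, θ i *
        (|∫ ω, ((X i ω : ℝ) - μi i) * ∑ j ∈ A i, (X j ω : ℝ) ∂P| *
            (∫ ω, ∑ j ∈ B i, (X j ω : ℝ) ∂P)
          + ∫ ω, |(X i ω : ℝ) - μi i| * (∑ j ∈ A i, (X j ω : ℝ)) *
              ((∑ j ∈ B i, (X j ω : ℝ)) - (∑ j ∈ A i, (X j ω : ℝ)) / 2 - 1 / 2) ∂P))
        + SteinC1 lam k * |lam - σ2| := by
  obtain rfl := hW
  obtain rfl := funext hμi
  have hl : 0 < lam := hlam ▸ sub_pos.2 ha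
  have hX2 := memLp_two_of_integrable_sq_sum hXmeas hW2int
  have hWmeas : Measurable fun ω => ∑ i, X i ω := Finset.measurable_fun_sum univ fun i _ => hXmeas i
  have hW2 : MemLp (fun ω => ((∑ i, X i ω : ℕ) : ℝ)) 2 P := by
    simpa only [Nat.cast_sum] using memLp_finsetSum univ fun i _ => hX2 i
  have hvar : Var[fun ω => ((∑ i, X i ω : ℕ) : ℝ); P] = σ2 := by
    rw [variance_eq_integral hW2.aestronglyMeasurable.aemeasurable, hσ, hμ]
  have hexpand := hLD2.abs_integral_centered_sum_mul_comp_sub_le hXmeas hX2 hI2 hFle hFmeas hθ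
    (fun n => abs_steinSolution_le hl (one_le_two.trans hk) (n - a))
    (isJordanBounded_fwdDiff_steinSolution_comp_sub hl hk a)
  refine (abs_measureReal_div_poissonTail_sub_one_le hl hk a hWmeas
    (hW2.integrable one_le_two) σ2).trans (add_le_add_left ?_ _)
  simp only [Nat.cast_sum] at hμ hvar
  simpa only [Nat.cast_sum, hvar, ← hμ, hlam, add_sub_cancel] using hexpand

/-- Theorem 1: moderate deviations in Poisson approximation under the local
dependence structure (LD2). -/
theorem poisson_md_local_dependence {Ω : Type*} [mΩ : MeasurableSpace Ω]
    (P : Measure Ω) [IsProbabilityMeasure P]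
    {I : Type*} [Fintype I] [DecidableEq I]
    (X : I → Ω → ℕ) (hXmeas : ∀ i, Measurable (X i))
    (A B : I → Finset I) (hiA : ∀ i, i ∈ A i) (hAB : ∀ i, A i ⊆ B i)
    -- (LD2): `X i` is independent of `{X j : j ∉ A i}` and
    -- `{X j : j ∈ A i}` is independent of `{X j : j ∉ B i}`.
    (hLD2a : ∀ i, IndepFun (X i) (fun ω => fun j : {j : I // j ∉ A i} => X j.1 ω) P)
    (hLD2b : ∀ i, IndepFun (fun ω => fun j : {j : I // j ∈ A i} => X j.1 ω)
      (fun ω => fun j : {j : I // j ∉ B i} => X j.1 ω) P)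
    (W : Ω → ℕ) (hW : W = fun ω => ∑ i, X i ω)
    (μi : I → ℝ) (hμi : ∀ i, μi i = ∫ ω, (X i ω : ℝ) ∂P)
    (μ σ2 : ℝ) (hμ : μ = ∫ ω, (W ω : ℝ) ∂P) (hσ : σ2 = ∫ ω, ((W ω : ℝ) - μ) ^ 2 ∂P)
    (hXint : ∀ i, Integrable (fun ω => (X i ω : ℝ)) P)
    (hW2int : Integrable (fun ω => (W ω : ℝ) ^ 2) P)
    (hI1 : ∀ i, Integrable (fun ω =>
      ((X i ω : ℝ) - μi i) * ∑ j ∈ A i, (X j ω : ℝ)) P)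
    (hI2 : ∀ i, Integrable (fun ω =>
      |(X i ω : ℝ) - μi i| * (∑ j ∈ A i, (X j ω : ℝ)) *
        ((∑ j ∈ B i, (X j ω : ℝ)) - (∑ j ∈ A i, (X j ω : ℝ)) / 2 - 1 / 2)) P)
    -- For each `i`, a σ-algebra making `{X j : j ∈ B i}` measurable.
    (F : I → MeasurableSpace Ω) (hFle : ∀ i, F i ≤ mΩ)
    (hFmeas : ∀ i, ∀ j ∈ B i, Measurable[F i] (X j))
    (θ : I → ℝ) (hθ01 : ∀ i, θ i ∈ Set.Icc (0 : ℝ) 1)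
    (hθ : ∀ i, ∀ j : ℕ, ∀ᵐ ω ∂P,
      (P[Set.indicator {ω' | W ω' = j} (fun _ => (1 : ℝ)) | F i]) ω ≤ θ i)
    (a : ℤ) (ha : (a : ℝ) < μ) (lam : ℝ) (hlam : lam = μ - a)
    (k : ℕ) (hk : 2 ≤ k) (hkl : lam < k) :
    |(P {ω | (k : ℤ) ≤ (W ω : ℤ) - a}).toReal / poissonTail lam k - 1| ≤
      SteinC2 lam k * (∑ i, θ i *
        (|∫ ω, ((X i ω : ℝ) - μi i) * ∑ j ∈ A i, (X j ω : ℝ) ∂P| *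
            (∫ ω, ∑ j ∈ B i, (X j ω : ℝ) ∂P)
          + ∫ ω, |(X i ω : ℝ) - μi i| * (∑ j ∈ A i, (X j ω : ℝ)) *
              ((∑ j ∈ B i, (X j ω : ℝ)) - (∑ j ∈ A i, (X j ω : ℝ)) / 2 - 1 / 2) ∂P))
        + SteinC1 lam k * |lam - σ2|
        + (P {ω | (W ω : ℤ) - a ≤ -2}).toReal :=
  (poisson_md_local_dependence_general P X hXmeas A B ⟨hiA, hAB, hLD2a, hLD2b⟩ W hW μi hμi μ σ2 hμ
    hσ hW2int hI2 F hFle hFmeas θ hθ a ha lam hlam k hk).trans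
      (le_add_of_nonneg_right ENNReal.toReal_nonneg)
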